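/- arXiv:2003.01388 — 3 statements merged into one kernel-verified Lean document; each statement's English description precedes it below -/
import Mathlib

section
/- Let τ ∈ ℤ, m ∈ ℝ, and let w : (−π/2, π/2) → ℂ be smooth. Define u : ℍ → ℂ by u(Φ(β,σ)) = e^{imσ} w(β). Then for all (β,σ), (D^τ u)(Φ(β,σ)) = e^{imσ} · (−cos²β · w″(β) + 2iτ cos²β · w′(β) + (m² cos²β − 2τ m sin β cos β) w(β)). -/
open Complex Real

noncomputable def pdx (u : ℂ → ℂ) (z : ℂ) : ℂ := fderiv ℝ u z 1
noncomputable def pdy (u : ℂ → ℂ) (z : ℂ) : ℂ := fderiv ℝ u z Complex.I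

/-- The τ-Laplacian `D^τ u = −y²(u_xx + u_yy) + 2iτ y u_x`. -/
noncomputable def tauLap (τ : ℤ) (u : ℂ → ℂ) (z : ℂ) : ℂ :=
  -(z.im : ℂ) ^ 2 * (pdx (pdx u) z + pdy (pdy u) z)
    + 2 * Complex.I * (τ : ℂ) * (z.im : ℂ) * pdx u z

/-- Cylindrical coordinates on ℍ: `Φ(β,σ) = e^σ sin β + i e^σ cos β`. -/
noncomputable def cyl (β σ : ℝ) : ℂ :=
  ((Real.exp σ * Real.sin β : ℝ) : ℂ) + ((Real.exp σ * Real.cos β : ℝ) : ℂ) * Complex.I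

def HasD (f : ℂ → ℂ) (a b : ℂ) (z : ℂ) : Prop :=
  ∃ D : ℂ →L[ℝ] ℂ, HasFDerivAt f D z ∧ D 1 = a ∧ D Complex.I = b

def HasDR (f : ℂ → ℝ) (a b : ℝ) (z : ℂ) : Prop :=
  ∃ D : ℂ →L[ℝ] ℝ, HasFDerivAt f D z ∧ D 1 = a ∧ D Complex.I = b

theorem HasD.mul {f g : ℂ → ℂ} {a b c d z : ℂ} (hf : HasD f a b z) (hg : HasD g c d z) :
    HasD (fun z => f z * g z) (f z * c + a * g z) (f z * d + b * g z) z := by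
  obtain ⟨D, h, rfl, rfl⟩ := hf
  obtain ⟨D', h', rfl, rfl⟩ := hg
  refine ⟨_, h.mul h', ?_, ?_⟩ <;> simp <;> ring

theorem HasD.add {f g : ℂ → ℂ} {a b c d z : ℂ} (hf : HasD f a b z) (hg : HasD g c d z) :
    HasD (fun z => f z + g z) (a + c) (b + d) z := by
  obtain ⟨D, h, rfl, rfl⟩ := hf
  obtain ⟨D', h', rfl, rfl⟩ := hg
  exact ⟨_, h.add h', by simp, by simp⟩

theorem HasD.const (k z : ℂ) : HasD (fun _ => k) 0 0 z :=
  ⟨0, hasFDerivAt_const _ _, by simp, by simp⟩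

theorem HasDR.mul {f g : ℂ → ℝ} {a b c d : ℝ} {z : ℂ} (hf : HasDR f a b z) (hg : HasDR g c d z) :
    HasDR (fun z => f z * g z) (f z * c + a * g z) (f z * d + b * g z) z := by
  obtain ⟨D, h, rfl, rfl⟩ := hf
  obtain ⟨D', h', rfl, rfl⟩ := hg
  refine ⟨_, h.mul h', ?_, ?_⟩ <;> simp <;> ring

theorem HasDR.add {f g : ℂ → ℝ} {a b c d : ℝ} {z : ℂ} (hf : HasDR f a b z) (hg : HasDR g c d z) :
    HasDR (fun z => f z + g z) (a + c) (b + d) z := by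
  obtain ⟨D, h, rfl, rfl⟩ := hf
  obtain ⟨D', h', rfl, rfl⟩ := hg
  exact ⟨_, h.add h', by simp, by simp⟩

theorem HasDR.comp {f : ℂ → ℝ} {a b : ℝ} {z : ℂ} (hf : HasDR f a b z) {g : ℝ → ℝ} {g' : ℝ}
    (hg : HasDerivAt g g' (f z)) : HasDR (fun z => g (f z)) (g' * a) (g' * b) z := by
  obtain ⟨D, h, rfl, rfl⟩ := hf
  exact ⟨_, hg.comp_hasFDerivAt z h, by simp, by simp⟩

theorem HasDR.compC {f : ℂ → ℝ} {a b : ℝ} {z : ℂ} (hf : HasDR f a b z) {g : ℝ → ℂ} {g' : ℂ}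
    (hg : HasDerivAt g g' (f z)) : HasD (fun z => g (f z)) (g' * a) (g' * b) z := by
  obtain ⟨D, h, rfl, rfl⟩ := hf
  refine ⟨_, hg.hasFDerivAt.comp z h, ?_, ?_⟩ <;> simp [mul_comm]

theorem HasDR.congr {f : ℂ → ℝ} {a b a' b' : ℝ} {z : ℂ} (hf : HasDR f a b z) (h : a = a')
    (h' : b = b') : HasDR f a' b' z := by subst h h'; exact hf

theorem HasD.congr {f : ℂ → ℂ} {a b a' b' : ℂ} {z : ℂ} (hf : HasD f a b z) (h : a = a')
    (h' : b = b') : HasD f a' b' z := by subst h h'; exact hf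

theorem HasD.pdx {f : ℂ → ℂ} {a b z : ℂ} (hf : HasD f a b z) : pdx f z = a := by
  obtain ⟨D, h, rfl, rfl⟩ := hf
  rw [_root_.pdx, h.fderiv]

theorem HasD.pdy {f : ℂ → ℂ} {a b z : ℂ} (hf : HasD f a b z) : pdy f z = b := by
  obtain ⟨D, h, rfl, rfl⟩ := hf
  rw [_root_.pdy, h.fderiv]

theorem HasD.congr_ev {f g : ℂ → ℂ} {a b z : ℂ} (hf : HasD f a b z)
    (h : ∀ z : ℂ, 0 < z.im → g z = f z) (hz : 0 < z.im) : HasD g a b z := by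
  obtain ⟨D, h1, h2, h3⟩ := hf
  refine ⟨D, h1.congr_of_eventuallyEq ?_, h2, h3⟩
  filter_upwards [(isOpen_lt continuous_const Complex.continuous_im).mem_nhds hz] with y hy
  exact h y hy

theorem hasDR_re (z : ℂ) : HasDR (fun z => z.re) 1 0 z :=
  ⟨Complex.reCLM, Complex.reCLM.hasFDerivAt, by simp, by simp⟩

theorem hasDR_im (z : ℂ) : HasDR (fun z => z.im) 0 1 z :=
  ⟨Complex.imCLM, Complex.imCLM.hasFDerivAt, by simp, by simp⟩

noncomputable def NN (z : ℂ) : ℝ := z.re * z.re + z.im * z.im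

theorem NN_pos {z : ℂ} (hz : 0 < z.im) : 0 < NN z := by
  unfold NN; nlinarith [mul_self_nonneg z.re, mul_pos hz hz]

theorem hasDR_NN (z : ℂ) : HasDR NN (2 * z.re) (2 * z.im) z :=
  (((hasDR_re z).mul (hasDR_re z)).add ((hasDR_im z).mul (hasDR_im z))).congr (by ring) (by ring)

noncomputable def PP (z : ℂ) : ℝ := z.re * (NN z)⁻¹
noncomputable def QQ (z : ℂ) : ℝ := z.im * (NN z)⁻¹
noncomputable def LL (z : ℂ) : ℝ := Real.log (NN z) * 2⁻¹
noncomputable def BB (z : ℂ) : ℝ := Real.arctan (z.re * (z.im)⁻¹)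

theorem hasDR_PP {z : ℂ} (hz : 0 < z.im) :
    HasDR PP (QQ z ^ 2 - PP z ^ 2) (-2 * PP z * QQ z) z := by
  have h := (NN_pos hz).ne'
  refine ((hasDR_re z).mul ((hasDR_NN z).comp (hasDerivAt_inv h))).congr ?_ ?_
  · unfold PP QQ; field_simp; unfold NN; ring
  · unfold PP QQ; field_simp; ring

theorem hasDR_QQ {z : ℂ} (hz : 0 < z.im) :
    HasDR QQ (-2 * PP z * QQ z) (PP z ^ 2 - QQ z ^ 2) z := by
  have h := (NN_pos hz).ne'
  refine ((hasDR_im z).mul ((hasDR_NN z).comp (hasDerivAt_inv h))).congr ?_ ?_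
  · unfold PP QQ; field_simp; ring
  · unfold PP QQ; field_simp; unfold NN; ring

theorem hasDR_LL {z : ℂ} (hz : 0 < z.im) : HasDR LL (PP z) (QQ z) z := by
  have h := (NN_pos hz).ne'
  refine ((hasDR_NN z).comp ((Real.hasDerivAt_log h).mul_const 2⁻¹)).congr ?_ ?_
  · unfold PP; field_simp
  · unfold QQ; field_simp

theorem hasDR_BB {z : ℂ} (hz : 0 < z.im) : HasDR BB (QQ z) (-PP z) z := by
  have h := (NN_pos hz).ne'
  have h2 : 1 + (z.re * (z.im)⁻¹) ^ 2 = NN z / z.im ^ 2 := by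
    unfold NN; field_simp; ring
  refine (((hasDR_re z).mul ((hasDR_im z).comp (hasDerivAt_inv hz.ne'))).comp
    (Real.hasDerivAt_arctan _)).congr ?_ ?_
  · rw [h2]; unfold QQ; field_simp; ring
  · rw [h2]; unfold PP; field_simp; ring

theorem hasD_ofReal {f : ℂ → ℝ} {a b : ℝ} {z : ℂ} (hf : HasDR f a b z) :
    HasD (fun z => (f z : ℂ)) a b z :=
  (hf.compC (g := fun x => (x : ℂ)) (Complex.ofRealCLM.hasDerivAt)).congr (by simp) (by simp)

noncomputable def GG (m : ℝ) (f : ℝ → ℂ) (z : ℂ) : ℂ :=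
  Complex.exp (Complex.I * (m : ℂ) * (LL z : ℂ)) * f (BB z)

theorem hasD_GG (m : ℝ) {f f' : ℝ → ℂ} {z : ℂ} (hz : 0 < z.im)
    (hf : HasDerivAt f (f' (BB z)) (BB z)) :
    HasD (GG m f) (Complex.I * m * PP z * GG m f z + QQ z * GG m f' z)
      (Complex.I * m * QQ z * GG m f z - PP z * GG m f' z) z := by
  have hE : HasDerivAt (fun x : ℝ => Complex.exp (Complex.I * (m : ℂ) * (x : ℂ)))
      (Complex.exp (Complex.I * (m : ℂ) * (LL z : ℂ)) * (Complex.I * m * 1)) (LL z) :=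
    ((Complex.ofRealCLM.hasDerivAt (x := LL z)).const_mul (Complex.I * (m : ℂ))).cexp
  refine (((hasDR_LL hz).compC hE).mul ((hasDR_BB hz).compC hf)).congr ?_ ?_
  · unfold GG; ring
  · unfold GG; push_cast; ring

theorem cyl_re (β σ : ℝ) : (cyl β σ).re = Real.exp σ * Real.sin β := by
  simp [cyl, -Complex.ofReal_exp, -Complex.ofReal_sin, -Complex.ofReal_cos, -Complex.ofReal_mul]
theorem cyl_im (β σ : ℝ) : (cyl β σ).im = Real.exp σ * Real.cos β := by
  simp [cyl, -Complex.ofReal_exp, -Complex.ofReal_sin, -Complex.ofReal_cos, -Complex.ofReal_mul]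

theorem NN_cyl (β σ : ℝ) : NN (cyl β σ) = Real.exp σ ^ 2 := by
  rw [NN, cyl_re, cyl_im]; linear_combination Real.exp σ ^ 2 * Real.sin_sq_add_cos_sq β

theorem LL_cyl (β σ : ℝ) : LL (cyl β σ) = σ := by
  rw [LL, NN_cyl, Real.log_pow, Real.log_exp]; push_cast; ring

theorem BB_cyl {β : ℝ} (hβ : β ∈ Set.Ioo (-(π / 2)) (π / 2)) (σ : ℝ) : BB (cyl β σ) = β := by
  have hc := (Real.cos_pos_of_mem_Ioo hβ).ne'
  have : (cyl β σ).re * ((cyl β σ).im)⁻¹ = Real.tan β := by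
    rw [cyl_re, cyl_im, Real.tan_eq_sin_div_cos]
    field_simp
  rw [BB, this, Real.arctan_tan hβ.1 hβ.2]

theorem BB_mem (z : ℂ) : BB z ∈ Set.Ioo (-(π / 2)) (π / 2) :=
  ⟨Real.neg_pi_div_two_lt_arctan _, Real.arctan_lt_pi_div_two _⟩

theorem cyl_BB_LL {z : ℂ} (hz : 0 < z.im) : cyl (BB z) (LL z) = z := by
  have hN := NN_pos hz
  have he : Real.exp (LL z) = √(NN z) := by
    rw [LL, Real.sqrt_eq_rpow, Real.rpow_def_of_pos hN]; norm_num
  have hs : √(1 + (z.re * (z.im)⁻¹) ^ 2) = √(NN z) / z.im := by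
    rw [show 1 + (z.re * (z.im)⁻¹) ^ 2 = NN z / z.im ^ 2 by unfold NN; field_simp; ring,
      Real.sqrt_div hN.le, Real.sqrt_sq hz.le]
  have hq := (Real.sqrt_pos.2 hN).ne'
  apply Complex.ext
  · rw [cyl_re, he, BB, Real.sin_arctan, hs]; field_simp
  · rw [cyl_im, he, BB, Real.cos_arctan, hs]; field_simp

/-- for `u(Φ(β,σ)) = e^{imσ} w(β)` one has
`(D^τ u)(Φ(β,σ)) = e^{imσ}(−cos²β w″ + 2iτ cos²β w′ + (m² cos²β − 2τ m sin β cos β) w)`. -/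
theorem stmt11 (τ : ℤ) (m : ℝ) (w : ℝ → ℂ)
    (hw : ContDiffOn ℝ (⊤ : ℕ∞) w (Set.Ioo (-(π / 2)) (π / 2)))
    (u : ℂ → ℂ)
    (hu : ∀ β ∈ Set.Ioo (-(π / 2)) (π / 2), ∀ σ : ℝ,
      u (cyl β σ) = Complex.exp (Complex.I * (m : ℂ) * (σ : ℂ)) * w β) :
    ∀ β ∈ Set.Ioo (-(π / 2)) (π / 2), ∀ σ : ℝ,
      tauLap τ u (cyl β σ)
        = Complex.exp (Complex.I * (m : ℂ) * (σ : ℂ)) *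
            (-(((Real.cos β ^ 2 : ℝ)) : ℂ) * deriv (deriv w) β
              + 2 * Complex.I * (τ : ℂ) * ((Real.cos β ^ 2 : ℝ) : ℂ) * deriv w β
              + ((m ^ 2 * Real.cos β ^ 2
                    - 2 * (τ : ℝ) * m * Real.sin β * Real.cos β : ℝ) : ℂ) * w β) := by
  have hU : ∀ z : ℂ, 0 < z.im → u z = GG m w z := by
    intro z hz
    conv_lhs => rw [← cyl_BB_LL hz]
    exact hu _ (BB_mem z) _
  have hd1 : ∀ β ∈ Set.Ioo (-(π / 2)) (π / 2), HasDerivAt w (deriv w β) β := fun β hβ =>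
    ((hw.differentiableOn (by simp)).differentiableAt (isOpen_Ioo.mem_nhds hβ)).hasDerivAt
  have hw' : ContDiffOn ℝ 1 (deriv w) (Set.Ioo (-(π / 2)) (π / 2)) :=
    hw.deriv_of_isOpen isOpen_Ioo (by norm_cast)
  have hd2 : ∀ β ∈ Set.Ioo (-(π / 2)) (π / 2),
      HasDerivAt (deriv w) (deriv (deriv w) β) β := fun β hβ =>
    ((hw'.differentiableOn (by simp)).differentiableAt (isOpen_Ioo.mem_nhds hβ)).hasDerivAt
  have hDu : ∀ z : ℂ, 0 < z.im → HasD u _ _ z := fun z hz =>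
    (hasD_GG m hz (hd1 _ (BB_mem z))).congr_ev hU hz
  intro β hβ σ
  have hc := Real.cos_pos_of_mem_Ioo hβ
  have hz : 0 < (cyl β σ).im := by rw [cyl_im]; positivity
  have h0 := hasD_GG m hz (hd1 _ (BB_mem (cyl β σ)))
  have h1 := hasD_GG m hz (hd2 _ (BB_mem (cyl β σ)))
  have hP := hasD_ofReal (hasDR_PP hz)
  have hQ := hasD_ofReal (hasDR_QQ hz)
  have hM := hasD_ofReal (z := cyl β σ) (f := fun _ => -1) (a := 0) (b := 0)
    ⟨0, hasFDerivAt_const _ _, by simp, by simp⟩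
  have hx := ((((HasD.const (Complex.I * m) _).mul hP).mul h0).add (hQ.mul h1)).congr_ev
    (g := pdx u) (fun z hz => (hDu z hz).pdx) hz
  have hy := ((((HasD.const (Complex.I * m) _).mul hQ).mul h0).add
    ((HasD.const (-1) _).mul (hP.mul h1))).congr_ev
    (g := pdy u) (fun z hz => (hDu z hz).pdy.trans (by ring)) hz
  rw [tauLap, hx.pdx, hy.pdy, (hDu _ hz).pdx]
  have e := Real.exp_pos σ
  have hPv : PP (cyl β σ) = Real.sin β / Real.exp σ := by
    rw [PP, NN_cyl, cyl_re]; field_simp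
  have hQv : QQ (cyl β σ) = Real.cos β / Real.exp σ := by
    rw [QQ, NN_cyl, cyl_im]; field_simp
  have e' : ((Real.exp σ : ℝ) : ℂ) ≠ 0 := by exact_mod_cast e.ne'
  have hsc : ((Real.sin β : ℝ) : ℂ) ^ 2 = 1 - ((Real.cos β : ℝ) : ℂ) ^ 2 := by
    rw [← Complex.ofReal_pow, Real.sin_sq]; push_cast; ring
  simp only [GG, LL_cyl, BB_cyl hβ, hPv, hQv, cyl_im]
  generalize Complex.exp (Complex.I * (m : ℂ) * (σ : ℂ)) = E
  push_cast [-Complex.ofReal_exp, -Complex.ofReal_cos, -Complex.ofReal_sin]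
  generalize ((Real.exp σ : ℝ) : ℂ) = r at *
  generalize ((Real.cos β : ℝ) : ℂ) = c at *
  generalize ((Real.sin β : ℝ) : ℂ) = s at *
  field_simp
  ring_nf
  simp only [hsc, Complex.I_sq]
  ring
end

section
/- For every B ∈ ℝ, the function η ↦ ∫₀^B arctan(η/√(t² − η² + 1)) dt is differentiable on (−1, 1), and its derivative at η equals ln(B + √(B² − η² + 1)) − (1/2) ln(1 − η²). -/
open Real MeasureTheory intervalIntegral

theorem stmt15_pos {x t : ℝ} (ht : t ^ 2 < 1) : 0 < x ^ 2 - t ^ 2 + 1 := by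
  nlinarith [sq_nonneg x]

theorem stmt15_param {x t : ℝ} (ht : t ^ 2 < 1) :
    HasDerivAt (fun t : ℝ => Real.arctan (t / Real.sqrt (x ^ 2 - t ^ 2 + 1)))
      (Real.sqrt (x ^ 2 - t ^ 2 + 1))⁻¹ t := by
  have hp := stmt15_pos (x := x) ht
  have hs := Real.sqrt_pos.mpr hp
  have hq := Real.sq_sqrt hp.le
  have h1 : HasDerivAt (fun t : ℝ => x ^ 2 - t ^ 2 + 1) (-(2 * t)) t := by
    have := (((hasDerivAt_id t).pow 2).const_sub (x ^ 2)).add_const 1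
    simpa using this
  have h2 := ((hasDerivAt_id t).div (h1.sqrt hp.ne') hs.ne').arctan
  refine h2.congr_deriv ?_
  simp only [id, Pi.div_apply]
  generalize Real.sqrt (x ^ 2 - t ^ 2 + 1) = s at *
  have h3 : s ^ 2 + t ^ 2 ≠ 0 := by positivity
  field_simp
  ring

theorem stmt15_prim {x t : ℝ} (ht : t ^ 2 < 1) :
    HasDerivAt (fun x : ℝ => Real.log (x + Real.sqrt (x ^ 2 - t ^ 2 + 1)))
      (Real.sqrt (x ^ 2 - t ^ 2 + 1))⁻¹ x := by
  have hp := stmt15_pos (x := x) ht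
  have hs := Real.sqrt_pos.mpr hp
  have hq := Real.sq_sqrt hp.le
  have h1 : HasDerivAt (fun x : ℝ => x ^ 2 - t ^ 2 + 1) (2 * x) x := by
    have := (((hasDerivAt_id x).pow 2).sub_const (t ^ 2)).add_const 1
    simpa using this
  have h4 : 0 < x + Real.sqrt (x ^ 2 - t ^ 2 + 1) := by
    by_contra h
    nlinarith
  have h2 := ((hasDerivAt_id x).add (h1.sqrt hp.ne')).log h4.ne'
  refine h2.congr_deriv ?_
  simp only [id, Pi.add_apply]
  generalize Real.sqrt (x ^ 2 - t ^ 2 + 1) = s at *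
  field_simp
  ring

/-- for every `B ∈ ℝ`, the function
`η ↦ ∫₀^B arctan(η/√(t² − η² + 1)) dt` is differentiable on `(−1,1)` with derivative
`ln(B + √(B² − η² + 1)) − (1/2) ln(1 − η²)` at `η`. -/
theorem stmt15 (B : ℝ) (η : ℝ) (hη : η ∈ Set.Ioo (-1 : ℝ) 1) :
    HasDerivAt (fun t : ℝ => ∫ x in (0 : ℝ)..B, Real.arctan (t / Real.sqrt (x ^ 2 - t ^ 2 + 1)))
      (Real.log (B + Real.sqrt (B ^ 2 - η ^ 2 + 1)) - (1 / 2) * Real.log (1 - η ^ 2)) η := by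
  have hη2 : η ^ 2 < 1 := by nlinarith [hη.1, hη.2]
  obtain ⟨r, hr1, hr2⟩ := exists_between hη2
  have hsne : ∀ t : ℝ, t ^ 2 < 1 → ∀ x : ℝ, Real.sqrt (x ^ 2 - t ^ 2 + 1) ≠ 0 := fun t ht x =>
    (Real.sqrt_pos.mpr (stmt15_pos ht)).ne'
  have hcs : ∀ t : ℝ, Continuous fun x : ℝ => Real.sqrt (x ^ 2 - t ^ 2 + 1) := fun t => by
    fun_prop
  have hc1 : ∀ t : ℝ, t ^ 2 < 1 →
      Continuous fun x : ℝ => Real.arctan (t / Real.sqrt (x ^ 2 - t ^ 2 + 1)) := fun t ht =>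
    Real.continuous_arctan.comp (continuous_const.div (hcs t) (hsne t ht))
  have hc2 : Continuous fun x : ℝ => (Real.sqrt (x ^ 2 - η ^ 2 + 1))⁻¹ :=
    (hcs η).inv₀ (hsne η hη2)
  have hnhds : {t : ℝ | t ^ 2 < r} ∈ nhds η :=
    (isOpen_lt (by fun_prop) continuous_const).mem_nhds hr1
  have key := intervalIntegral.hasDerivAt_integral_of_dominated_loc_of_deriv_le
    (μ := volume) (a := 0) (b := B)
    (F := fun t x : ℝ => Real.arctan (t / Real.sqrt (x ^ 2 - t ^ 2 + 1)))
    (F' := fun t x : ℝ => (Real.sqrt (x ^ 2 - t ^ 2 + 1))⁻¹)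
    (bound := fun _ => (Real.sqrt (1 - r))⁻¹) hnhds
    (by
      filter_upwards [hnhds] with t ht
      exact (hc1 t (lt_trans ht hr2)).aestronglyMeasurable)
    ((hc1 η hη2).intervalIntegrable _ _)
    hc2.aestronglyMeasurable
    (by
      refine Filter.Eventually.of_forall fun x _ t ht => ?_
      have ht' : t ^ 2 < r := ht
      rw [Real.norm_of_nonneg (by positivity)]
      apply inv_anti₀ (Real.sqrt_pos.mpr (by linarith))
      apply Real.sqrt_le_sqrt
      nlinarith [sq_nonneg x])
    (continuous_const.intervalIntegrable _ _)
    (Filter.Eventually.of_forall fun x _ t ht => stmt15_param (lt_trans ht hr2))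
  refine key.2.congr_deriv ?_
  rw [intervalIntegral.integral_eq_sub_of_hasDerivAt (fun x _ => stmt15_prim hη2)
    (hc2.intervalIntegrable _ _)]
  have : (0 : ℝ) + Real.sqrt (0 ^ 2 - η ^ 2 + 1) = Real.sqrt (1 - η ^ 2) := by
    rw [zero_add]; congr 1; ring
  rw [this, Real.log_sqrt (by linarith)]
  ring
end

section
/- Let B ∈ ℝ, let a,b,c,d ∈ ℝ with ad − bc = 1, and let γ(z) = (az+b)/(cz+d). For z = x + iy ∈ ℍ set α = Re(1/(cz+d)²) and β₀ = Im(1/(cz+d)²), and define δ(x,y,ξ₁,ξ₂) := (Re γ(z), Im γ(z), (α ξ₁ − β₀ ξ₂)/(α² + β₀²) + 2B c² y, (β₀ ξ₁ + α ξ₂)/(α² + β₀²) + 2B c(cx + d)). Then for every (x, y, vₓ, v_y) with y > 0, φ_B(δ(φ_B^{-1}(x,y,vₓ,v_y))) = (Re γ(z), Im γ(z), α vₓ − β₀ v_y, β₀ vₓ + α v_y); that is, φ_B ∘ δ ∘ φ_B^{-1} is the differential of the Möbius transformation γ acting on tangent vectors. -/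
open Complex

/-- The identification `φ_B : T*ℍ → Tℍ`, `(x,y,ξ₁,ξ₂) ↦ (x, y, y²ξ₁ − By, y²ξ₂)`. -/
noncomputable def phiB (B : ℝ) (p : ℝ × ℝ × ℝ × ℝ) : ℝ × ℝ × ℝ × ℝ :=
  (p.1, p.2.1, p.2.1 ^ 2 * p.2.2.1 - B * p.2.1, p.2.1 ^ 2 * p.2.2.2)

/-- The inverse identification `φ_B⁻¹ : Tℍ → T*ℍ`, `(x,y,vₓ,v_y) ↦ (x, y, (vₓ+By)/y², v_y/y²)`. -/
noncomputable def phiBinv (B : ℝ) (q : ℝ × ℝ × ℝ × ℝ) : ℝ × ℝ × ℝ × ℝ :=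
  (q.1, q.2.1, (q.2.2.1 + B * q.2.1) / q.2.1 ^ 2, q.2.2.2 / q.2.1 ^ 2)

/-- The point `x + iy ∈ ℂ`. -/
noncomputable def mz (x y : ℝ) : ℂ := (x : ℂ) + (y : ℂ) * Complex.I

/-- The Möbius image `γ(z) = (az+b)/(cz+d)` of `z = x + iy`. -/
noncomputable def gam (a b c d x y : ℝ) : ℂ :=
  ((a : ℂ) * mz x y + (b : ℂ)) / ((c : ℂ) * mz x y + (d : ℂ))

/-- `α = Re(1/(cz+d)²)` at `z = x+iy`. -/
noncomputable def alph (c d x y : ℝ) : ℝ := (1 / ((c : ℂ) * mz x y + (d : ℂ)) ^ 2).re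

/-- `β₀ = Im(1/(cz+d)²)` at `z = x+iy`. -/
noncomputable def bet (c d x y : ℝ) : ℝ := (1 / ((c : ℂ) * mz x y + (d : ℂ)) ^ 2).im

/-- The cotangent-bundle map δ from the Egorov-theorem computation. -/
noncomputable def deltaMap (B a b c d : ℝ) (p : ℝ × ℝ × ℝ × ℝ) : ℝ × ℝ × ℝ × ℝ :=
  ((gam a b c d p.1 p.2.1).re, (gam a b c d p.1 p.2.1).im,
    (alph c d p.1 p.2.1 * p.2.2.1 - bet c d p.1 p.2.1 * p.2.2.2) /
        (alph c d p.1 p.2.1 ^ 2 + bet c d p.1 p.2.1 ^ 2) + 2 * B * c ^ 2 * p.2.1,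
    (bet c d p.1 p.2.1 * p.2.2.1 + alph c d p.1 p.2.1 * p.2.2.2) /
        (alph c d p.1 p.2.1 ^ 2 + bet c d p.1 p.2.1 ^ 2) + 2 * B * c * (c * p.1 + d))

theorem aux_N (c d x y a b : ℝ) (h : a * d - b * c = 1) (hy : 0 < y) :
    0 < (c * x + d) ^ 2 + (c * y) ^ 2 := by
  by_cases hc : c = 0
  · subst hc
    have hd : d ≠ 0 := by
      rintro rfl
      simp at h
    have := sq_pos_of_ne_zero hd
    simpa using this
  · have := sq_pos_of_ne_zero (mul_ne_zero hc hy.ne')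
    positivity

theorem aux_den (c d x y : ℝ) :
    (c : ℂ) * mz x y + (d : ℂ) = ⟨c * x + d, c * y⟩ := by
  apply Complex.ext <;> simp [mz]

theorem aux_alph (c d x y : ℝ) :
    alph c d x y = ((c * x + d) ^ 2 - (c * y) ^ 2) / ((c * x + d) ^ 2 + (c * y) ^ 2) ^ 2 := by
  unfold alph
  rw [aux_den, one_div, Complex.inv_re, map_pow, Complex.normSq_mk, pow_two (Complex.mk _ _),
    Complex.mul_re]
  ring

theorem aux_bet (c d x y : ℝ) :
    bet c d x y = (-2 * (c * x + d) * (c * y)) / ((c * x + d) ^ 2 + (c * y) ^ 2) ^ 2 := by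
  unfold bet
  rw [aux_den, one_div, Complex.inv_im, map_pow, Complex.normSq_mk, pow_two (Complex.mk _ _),
    Complex.mul_im]
  ring

theorem aux_gam (a b c d x y : ℝ) (h : a * d - b * c = 1) :
    (gam a b c d x y).im = y / ((c * x + d) ^ 2 + (c * y) ^ 2) := by
  unfold gam
  rw [aux_den, aux_den, Complex.div_im, Complex.normSq_mk, ← sub_div]
  congr 1
  · linear_combination y * h
  · ring

/-- `φ_B ∘ δ ∘ φ_B⁻¹` is the differential of the Möbius transformation γ
acting on tangent vectors: it sends `(x,y,vₓ,v_y)` to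
`(Re γ(z), Im γ(z), α vₓ − β₀ v_y, β₀ vₓ + α v_y)`. -/
theorem stmt16 (B a b c d : ℝ) (h : a * d - b * c = 1) (x y vx vy : ℝ) (hy : 0 < y) :
    phiB B (deltaMap B a b c d (phiBinv B (x, y, vx, vy)))
      = ((gam a b c d x y).re, (gam a b c d x y).im,
          alph c d x y * vx - bet c d x y * vy,
          bet c d x y * vx + alph c d x y * vy) := by
  have hN := aux_N c d x y a b h hy
  have hA := aux_alph c d x y
  have hB := aux_bet c d x y
  have hG := aux_gam a b c d x y h
  obtain ⟨N, hNe⟩ : ∃ N, N = (c * x + d) ^ 2 + (c * y) ^ 2 := ⟨_, rfl⟩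
  rw [← hNe] at hN hA hB hG
  have hy' := hy.ne'
  have hN' := hN.ne'
  have hS : alph c d x y ^ 2 + bet c d x y ^ 2 = 1 / N ^ 2 := by
    rw [hA, hB]
    field_simp
    rw [hNe]
    ring
  simp only [phiB, deltaMap, phiBinv, Prod.mk.injEq, true_and]
  rw [hS, hG, hA, hB]
  constructor
  · field_simp
    rw [hNe]
    ring
  · field_simp
    ring
end
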